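/- arXiv:2012.11141 — 3 statements merged into one kernel-verified Lean document; each statement's English description precedes it below -/
import Mathlib

section
/- Let a > 0 and let φ₁ : ℝ → ℝ be a 1-kink. For every compactly supported C¹ function v : ℝ → ℝ that is not identically zero, the quadratic form of the linearized operator L₁ is strictly positive: ∫_{−∞}^{∞} ( v'(r)² + ( 2 − 4·sin²(φ₁(r)) + a²/(r²+a²)² )·v(r)² ) dr > 0. In particular L₁ has no negative or zero eigenvalues, so the 1-kink is linearly stable. -/
open Real Filter

/-- Energy is nonnegative, derivative nonzero, etc. -/
theorem kink_aux (a : ℝ) (ha : 0 < a) (φ ψ : ℝ → ℝ)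
    (h1 : ∀ r, HasDerivAt φ (ψ r) r)
    (h2 : ∀ r, HasDerivAt ψ (Real.sin (2 * φ r) - (2 * r / (r ^ 2 + a ^ 2)) * ψ r) r)
    (hψc : Continuous ψ)
    (hbot : Tendsto φ atBot (nhds 0))
    (htop : Tendsto φ atTop (nhds Real.pi)) :
    (∀ r, 0 < φ r ∧ φ r < Real.pi) ∧ (∀ r, 0 < ψ r ^ 2 - 2 * Real.sin (φ r) ^ 2) := by
  have hp : ∀ r : ℝ, 0 < r ^ 2 + a ^ 2 := fun r => by positivity
  have hE : ∀ r, HasDerivAt (fun r => ψ r ^ 2 - 2 * Real.sin (φ r) ^ 2)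
      (-(4 * r / (r ^ 2 + a ^ 2) * ψ r ^ 2)) r := by
    intro r
    have := ((h2 r).pow 2).sub ((((h1 r).sin).pow 2).const_mul 2)
    refine this.congr_deriv ?_
    rw [Real.sin_two_mul]
    push_cast
    ring
  have hEc : Continuous (fun r => ψ r ^ 2 - 2 * Real.sin (φ r) ^ 2) :=
    continuous_iff_continuousAt.2 fun r => (hE r).continuousAt
  have hlb : Tendsto (fun r => -(2 * Real.sin (φ r) ^ 2)) atBot (nhds 0) := by
    have := (((Real.continuous_sin.tendsto 0).comp hbot).pow 2).const_mul 2 |>.neg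
    simpa [Function.comp_def] using this
  have hlt : Tendsto (fun r => -(2 * Real.sin (φ r) ^ 2)) atTop (nhds 0) := by
    have := (((Real.continuous_sin.tendsto Real.pi).comp htop).pow 2).const_mul 2 |>.neg
    simpa [Function.comp_def] using this
  have hmono : MonotoneOn (fun r => ψ r ^ 2 - 2 * Real.sin (φ r) ^ 2) (Set.Iic 0) := by
    refine monotoneOn_of_deriv_nonneg (convex_Iic 0) hEc.continuousOn
      (fun x _ => (hE x).differentiableAt.differentiableWithinAt) ?_
    intro x hx
    rw [interior_Iic] at hx
    rw [(hE x).deriv]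
    have : 4 * x / (x ^ 2 + a ^ 2) ≤ 0 :=
      div_nonpos_of_nonpos_of_nonneg (by linarith [Set.mem_Iio.1 hx]) (hp x).le
    nlinarith [sq_nonneg (ψ x)]
  have hanti : AntitoneOn (fun r => ψ r ^ 2 - 2 * Real.sin (φ r) ^ 2) (Set.Ici 0) := by
    refine antitoneOn_of_deriv_nonpos (convex_Ici 0) hEc.continuousOn
      (fun x _ => (hE x).differentiableAt.differentiableWithinAt) ?_
    intro x hx
    rw [interior_Ici] at hx
    rw [(hE x).deriv]
    have : 0 ≤ 4 * x / (x ^ 2 + a ^ 2) :=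
      div_nonneg (by linarith [Set.mem_Ioi.1 hx]) (hp x).le
    nlinarith [sq_nonneg (ψ x)]
  have hE0 : ∀ r, 0 ≤ ψ r ^ 2 - 2 * Real.sin (φ r) ^ 2 := by
    intro r
    rcases le_total r 0 with hr | hr
    · refine le_of_tendsto hlb ?_
      filter_upwards [eventually_le_atBot r] with x hx
      have := hmono (Set.mem_Iic.2 (hx.trans hr)) (Set.mem_Iic.2 hr) hx
      simp only at this
      nlinarith [sq_nonneg (ψ x)]
    · refine le_of_tendsto hlt ?_
      filter_upwards [eventually_ge_atTop r] with x hx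
      have := hanti (Set.mem_Ici.2 hr) (Set.mem_Ici.2 (hr.trans hx)) hx
      simp only at this
      nlinarith [sq_nonneg (ψ x)]
  -- nonvanishing of ψ by a Gronwall argument
  have hψ0 : ∀ r, ψ r ≠ 0 := by
    intro r0 h0
    have hs0 : Real.sin (φ r0) ^ 2 = 0 := by
      have := hE0 r0
      rw [h0] at this
      nlinarith [sq_nonneg (Real.sin (φ r0))]
    set F : ℝ → ℝ := fun r => ψ r ^ 2 + Real.sin (φ r) ^ 2 with hF
    set F' : ℝ → ℝ := fun r => 3 * Real.sin (2 * φ r) * ψ r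
      - 2 * (2 * r / (r ^ 2 + a ^ 2)) * ψ r ^ 2 with hF'
    have hFd : ∀ r, HasDerivAt F (F' r) r := by
      intro r
      have := ((h2 r).pow 2).add (((h1 r).sin).pow 2)
      refine this.congr_deriv ?_
      simp only [hF']
      rw [Real.sin_two_mul]
      push_cast
      ring
    have hFn : ∀ r, 0 ≤ F r := fun r => by positivity
    set C : ℝ := 3 + 2 / a with hC
    have hbd : ∀ r, |F' r| ≤ C * F r := by
      intro r
      have hc : |2 * r / (r ^ 2 + a ^ 2)| ≤ 1 / a := by
        rw [abs_div, abs_of_pos (hp r), div_le_div_iff₀ (hp r) ha, abs_mul, abs_two,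
          ← sq_abs r]
        nlinarith [sq_nonneg (|r| - a)]
      have hs : |3 * Real.sin (2 * φ r) * ψ r| ≤ 3 * F r := by
        rw [Real.sin_two_mul]
        have e : |3 * (2 * Real.sin (φ r) * Real.cos (φ r)) * ψ r|
            = 6 * |Real.sin (φ r)| * |ψ r| * |Real.cos (φ r)| := by
          simp only [abs_mul]
          norm_num
          ring
        rw [e]
        have hc1 := Real.abs_cos_le_one (φ r)
        have : 6 * |Real.sin (φ r)| * |ψ r| * |Real.cos (φ r)|
            ≤ 6 * |Real.sin (φ r)| * |ψ r| * 1 := by gcongr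
        simp only [hF]
        rw [← sq_abs (ψ r), ← sq_abs (Real.sin (φ r))]
        nlinarith [sq_nonneg (|Real.sin (φ r)| - |ψ r|)]
      have ht : |2 * (2 * r / (r ^ 2 + a ^ 2)) * ψ r ^ 2| ≤ 2 / a * F r := by
        rw [abs_mul, abs_mul, abs_two, abs_of_nonneg (sq_nonneg (ψ r))]
        have : 2 / a * F r = 2 * (1 / a) * F r := by ring
        rw [this]
        have hle : ψ r ^ 2 ≤ F r := by
          simp only [hF]; nlinarith [sq_nonneg (Real.sin (φ r))]
        gcongr
      calc |F' r| ≤ _ := abs_sub _ _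
        _ ≤ 3 * F r + 2 / a * F r := add_le_add hs ht
        _ = C * F r := by rw [hC]; ring
    have hF0 : F r0 = 0 := by simp only [hF]; rw [h0, hs0]; norm_num
    have hexp : ∀ k r : ℝ, HasDerivAt (fun r => F r * Real.exp (k * r))
        ((F' r + k * F r) * Real.exp (k * r)) r := by
      intro k r
      have := (hFd r).mul (((hasDerivAt_id r).const_mul k).exp)
      refine this.congr_deriv ?_
      simp
      ring
    have hup : Monotone (fun r => F r * Real.exp (C * r)) := by
      refine monotone_of_deriv_nonneg (fun r => (hexp C r).differentiableAt) fun r => ?_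
      rw [(hexp C r).deriv]
      have := neg_le_of_abs_le (hbd r)
      exact mul_nonneg (by linarith) (Real.exp_pos _).le
    have hdn : Antitone (fun r => F r * Real.exp (-C * r)) := by
      refine antitone_of_deriv_nonpos (fun r => (hexp (-C) r).differentiableAt) fun r => ?_
      rw [(hexp (-C) r).deriv]
      have := le_of_abs_le (hbd r)
      exact mul_nonpos_of_nonpos_of_nonneg (by linarith) (Real.exp_pos _).le
    have hFz : ∀ r, F r = 0 := by
      intro r
      refine le_antisymm ?_ (hFn r)
      rcases le_total r r0 with hr | hr
      · have := hup hr
        simp only [hF0, zero_mul] at this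
        exact nonpos_of_mul_nonpos_left this (Real.exp_pos _)
      · have := hdn hr
        simp only [hF0, zero_mul] at this
        exact nonpos_of_mul_nonpos_left this (Real.exp_pos _)
    have hψz : ∀ r, ψ r = 0 := by
      intro r
      have := hFz r
      simp only [hF] at this
      have h : ψ r ^ 2 = 0 := by nlinarith [sq_nonneg (Real.sin (φ r)), sq_nonneg (ψ r)]
      exact pow_eq_zero_iff (two_ne_zero) |>.1 h
    have hconst : φ = fun _ => φ 0 := by
      funext x
      exact is_const_of_deriv_eq_zero (fun r => (h1 r).differentiableAt)
        (fun r => by rw [(h1 r).deriv, hψz r]) x 0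
    rw [hconst] at hbot htop
    have e1 := tendsto_nhds_unique hbot tendsto_const_nhds
    have e2 := tendsto_nhds_unique htop tendsto_const_nhds
    exact Real.pi_pos.ne (e1.trans e2.symm)
  have hpos : ∀ r, 0 < ψ r := by
    by_contra hcon
    push Not at hcon
    obtain ⟨r1, hr1⟩ := hcon
    have hneg : ∀ r, ψ r ≤ 0 := by
      intro r
      by_contra hr
      push Not at hr
      obtain ⟨z, hz⟩ := mem_range_of_exists_le_of_exists_ge hψc ⟨r1, hr1⟩ ⟨r, hr.le⟩
      exact hψ0 z hz
    have han : Antitone φ := antitone_of_deriv_nonpos (fun r => (h1 r).differentiableAt)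
      fun r => by rw [(h1 r).deriv]; exact hneg r
    have e1 := han.le_of_tendsto htop 0
    have e2 := han.ge_of_tendsto hbot 0
    linarith [Real.pi_pos]
  have hsm : StrictMono φ := strictMono_of_deriv_pos fun r => by
    rw [(h1 r).deriv]; exact hpos r
  refine ⟨fun r => ⟨?_, ?_⟩, fun r => ?_⟩
  · exact (hsm.monotone.le_of_tendsto hbot (r - 1)).trans_lt (hsm (by linarith))
  · exact (hsm (by linarith : r < r + 1)).trans_le (hsm.monotone.ge_of_tendsto htop (r + 1))
  · have hEs : ∀ x, x ≠ 0 → deriv (fun r => ψ r ^ 2 - 2 * Real.sin (φ r) ^ 2) x ≠ 0 := by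
      intro x hx
      rw [(hE x).deriv]
      exact neg_ne_zero.2 (mul_ne_zero (div_ne_zero (by positivity) (hp x).ne')
        (pow_ne_zero 2 (hψ0 x)))
    rcases le_total r 0 with hr | hr
    · have hstrict : StrictMonoOn (fun r => ψ r ^ 2 - 2 * Real.sin (φ r) ^ 2) (Set.Iic 0) := by
        refine strictMonoOn_of_deriv_pos (convex_Iic 0) hEc.continuousOn ?_
        intro x hx
        rw [interior_Iic] at hx
        rw [(hE x).deriv]
        have h4 : 4 * x / (x ^ 2 + a ^ 2) < 0 :=
          div_neg_of_neg_of_pos (by linarith [Set.mem_Iio.1 hx]) (hp x)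
        have := hpos x
        have := mul_neg_of_neg_of_pos h4 (pow_pos this 2)
        linarith
      exact (hE0 (r - 1)).trans_lt
        (hstrict (Set.mem_Iic.2 (by linarith)) (Set.mem_Iic.2 hr) (by linarith))
    · have hstrict : StrictAntiOn (fun r => ψ r ^ 2 - 2 * Real.sin (φ r) ^ 2) (Set.Ici 0) := by
        refine strictAntiOn_of_deriv_neg (convex_Ici 0) hEc.continuousOn ?_
        intro x hx
        rw [interior_Ici] at hx
        rw [(hE x).deriv]
        have h4 : 0 < 4 * x / (x ^ 2 + a ^ 2) :=
          div_pos (by linarith [Set.mem_Ioi.1 hx]) (hp x)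
        have := hpos x
        have := mul_pos h4 (pow_pos this 2)
        linarith
      exact (hE0 (r + 1)).trans_lt
        (hstrict (Set.mem_Ici.2 hr) (Set.mem_Ici.2 (by linarith)) (by linarith))

/-- The quadratic form of the linearized operator `L₁` around the `1`-kink is strictly
positive on nonzero compactly supported `C¹` functions: the `1`-kink is linearly stable. -/
theorem quadratic_form_pos (a : ℝ) (ha : 0 < a) (φ₁ : ℝ → ℝ)
    (hφ : ContDiff ℝ 2 φ₁)
    (hφeq : ∀ r : ℝ, deriv (deriv φ₁) r + (2 * r / (r ^ 2 + a ^ 2)) * deriv φ₁ r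
        = Real.sin (2 * φ₁ r))
    (hbot : Tendsto φ₁ atBot (nhds 0))
    (htop : Tendsto φ₁ atTop (nhds Real.pi))
    (v : ℝ → ℝ) (hv : ContDiff ℝ 1 v) (hsupp : HasCompactSupport v) (hne : v ≠ 0) :
    0 < ∫ r : ℝ, ((deriv v r) ^ 2
        + (2 - 4 * Real.sin (φ₁ r) ^ 2 + a ^ 2 / (r ^ 2 + a ^ 2) ^ 2) * (v r) ^ 2) := by
  have hp : ∀ r : ℝ, 0 < r ^ 2 + a ^ 2 := fun r => by positivity
  have hφc : Continuous φ₁ := hφ.continuous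
  have h1 : ∀ r, HasDerivAt φ₁ (deriv φ₁ r) r := fun r =>
    (hφ.differentiable (by norm_num) r).hasDerivAt
  have hψ : ContDiff ℝ 1 (deriv φ₁) := by
    have : ContDiff ℝ (1 + 1) φ₁ := by
      convert hφ using 1
      norm_num
    exact (contDiff_succ_iff_deriv.1 this).2.2
  have h2 : ∀ r, HasDerivAt (deriv φ₁)
      (Real.sin (2 * φ₁ r) - (2 * r / (r ^ 2 + a ^ 2)) * deriv φ₁ r) r := fun r => by
    have := (hψ.differentiable (by norm_num) r).hasDerivAt
    refine this.congr_deriv ?_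
    linarith [hφeq r]
  obtain ⟨hrange, hEpos⟩ := kink_aux a ha φ₁ (deriv φ₁) h1 h2 hψ.continuous hbot htop
  set ψ := deriv φ₁ with hψdef
  have hψc : Continuous ψ := hψ.continuous
  have hs : ∀ r, 0 < Real.sin (φ₁ r) := fun r =>
    Real.sin_pos_of_pos_of_lt_pi (hrange r).1 (hrange r).2
  have hvc : Continuous v := hv.continuous
  have hvd : ∀ r, HasDerivAt v (deriv v r) r := fun r =>
    (hv.differentiable (by norm_num) r).hasDerivAt
  have hv'c : Continuous (deriv v) := hv.continuous_deriv (by norm_num)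
  have hsupp' : HasCompactSupport (deriv v) := hsupp.deriv
  set g : ℝ → ℝ := fun r => r / (r ^ 2 + a ^ 2) + ψ r * Real.cos (φ₁ r) / Real.sin (φ₁ r)
    with hg
  set g' : ℝ → ℝ := fun r => a ^ 2 / (r ^ 2 + a ^ 2) ^ 2 + 2 * Real.cos (φ₁ r) ^ 2
    - ψ r ^ 2 - g r ^ 2 with hg'
  have hgd : ∀ r, HasDerivAt g (g' r) r := by
    intro r
    have hpd : HasDerivAt (fun r : ℝ => r ^ 2 + a ^ 2) (2 * r) r := by
      simpa using ((hasDerivAt_id r).pow 2).add_const (a ^ 2)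
    have := ((hasDerivAt_id r).div hpd (hp r).ne').add
      (((h2 r).mul (h1 r).cos).div (h1 r).sin (hs r).ne')
    refine this.congr_deriv ?_
    have hpr := (hp r).ne'
    have hsr := (hs r).ne'
    have hsc := Real.sin_sq_add_cos_sq (φ₁ r)
    simp only [hg', hg, id, Real.sin_two_mul, Pi.mul_apply]
    field_simp
    have hc2 : Real.cos (φ₁ r) ^ 2 = 1 - Real.sin (φ₁ r) ^ 2 := by linarith
    ring_nf
  have hgc : Continuous g := continuous_iff_continuousAt.2 fun r => (hgd r).continuousAt
  have hpc : Continuous (fun r : ℝ => a ^ 2 / (r ^ 2 + a ^ 2) ^ 2) :=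
    continuous_const.div (by fun_prop) fun r => (pow_pos (hp r) 2).ne'
  have hg'c : Continuous g' := by
    simp only [hg']
    fun_prop
  -- the three pieces
  set A : ℝ → ℝ := fun r => (deriv v r - g r * v r) ^ 2
    + (ψ r ^ 2 - 2 * Real.sin (φ₁ r) ^ 2) * v r ^ 2 with hA
  set B : ℝ → ℝ := fun r => g' r * v r ^ 2 + g r * (2 * v r * deriv v r) with hB
  have hAc : Continuous A := by simp only [hA]; fun_prop
  have hBc : Continuous B := by simp only [hB]; fun_prop
  have hz : ∀ r, r ∉ tsupport v → v r = 0 ∧ deriv v r = 0 := fun r hr =>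
    ⟨image_eq_zero_of_notMem_tsupport hr,
      Function.notMem_support.1 fun h => hr (support_deriv_subset h)⟩
  have hAs : HasCompactSupport A := HasCompactSupport.intro hsupp fun r hr => by
    simp [hA, (hz r hr).1, (hz r hr).2]
  have hBs : HasCompactSupport B := HasCompactSupport.intro hsupp fun r hr => by
    simp [hB, (hz r hr).1]
  have hGs : HasCompactSupport (fun r => g r * v r ^ 2) :=
    HasCompactSupport.intro hsupp fun r hr => by simp [(hz r hr).1]
  have hAi := hAc.integrable_of_hasCompactSupport hAs (μ := MeasureTheory.volume)
  have hBi := hBc.integrable_of_hasCompactSupport hBs (μ := MeasureTheory.volume)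
  have hGi := ((hgc.mul (hvc.pow 2)).integrable_of_hasCompactSupport hGs
    (μ := MeasureTheory.volume))
  have hB0 : ∫ r, B r = 0 := by
    refine MeasureTheory.integral_eq_zero_of_hasDerivAt_of_integrable
      (f := fun r => g r * v r ^ 2) (fun r => ?_) hBi hGi
    refine ((hgd r).mul ((hvd r).pow 2)).congr_deriv ?_
    simp [hB]
  have hsplit : (fun r : ℝ => (deriv v r) ^ 2
      + (2 - 4 * Real.sin (φ₁ r) ^ 2 + a ^ 2 / (r ^ 2 + a ^ 2) ^ 2) * (v r) ^ 2)
      = fun r => A r + B r := by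
    funext r
    have hc2 : Real.cos (φ₁ r) ^ 2 = 1 - Real.sin (φ₁ r) ^ 2 := by
      linarith [Real.sin_sq_add_cos_sq (φ₁ r)]
    simp only [hA, hB, hg', hc2]
    ring
  rw [hsplit, MeasureTheory.integral_add hAi hBi, hB0, add_zero]
  obtain ⟨x, hx⟩ := Function.ne_iff.1 hne
  have hAnn : 0 ≤ A := fun r =>
    add_nonneg (sq_nonneg _) (mul_nonneg (hEpos r).le (sq_nonneg _))
  refine hAc.integral_pos_of_hasCompactSupport_nonneg_nonzero hAs hAnn (x := x) ?_
  have hx' : v x ≠ 0 := hx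
  have : 0 < A x := add_pos_of_nonneg_of_pos (sq_nonneg _)
    (mul_pos (hEpos x) (by positivity))
  exact this.ne'
end

section
/- Let H(r) = 2·arctan(exp(√2·r)) and let ψ : ℝ → ℝ be any C² solution of ψ''(r) − 2·cos(2·H(r))·ψ(r) = −2·r·H'(r) such that ψ(r) → 0 and ψ'(r) → 0 as r → ±∞. Then 4·∫_{−∞}^{∞} sin(2·H(r))·ψ(r)·H'(r)² dr = −∫_{−∞}^{∞} H'(r)² dr = −2·√2. Consequently, with the normalized zero mode v₀ = 2^{-3/4}·H', the first-order eigenvalue coefficient c = 1 − 4·∫_{−∞}^{∞} sin(2·H(r))·ψ(r)·v₀(r)² dr equals 2. -/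
open Real Filter

lemma aux_sin_two_arctan (x : ℝ) : Real.sin (2 * Real.arctan x) = 2 * x / (1 + x ^ 2) := by
  have h : (0:ℝ) < 1 + x ^ 2 := by positivity
  have h1 : Real.sqrt (1 + x ^ 2) ^ 2 = 1 + x ^ 2 := Real.sq_sqrt h.le
  have h2 : Real.sqrt (1 + x ^ 2) ≠ 0 := (Real.sqrt_pos.2 h).ne'
  rw [Real.sin_two_mul, Real.sin_arctan, Real.cos_arctan, ← h1, Real.sqrt_sq (Real.sqrt_nonneg _)]
  field_simp

lemma aux_cos_two_arctan (x : ℝ) : Real.cos (2 * Real.arctan x) = (1 - x ^ 2) / (1 + x ^ 2) := by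
  have h : (0:ℝ) < 1 + x ^ 2 := by positivity
  rw [Real.cos_two_mul, Real.cos_sq_arctan]
  field_simp
  ring

lemma aux_sinH (y : ℝ) : Real.sin (2 * Real.arctan (Real.exp y)) = 1 / Real.cosh y := by
  rw [aux_sin_two_arctan, Real.cosh_eq, Real.exp_neg]
  have := Real.exp_pos y
  field_simp
  ring

lemma aux_cosH (y : ℝ) :
    Real.cos (2 * Real.arctan (Real.exp y)) = - Real.sinh y / Real.cosh y := by
  rw [aux_cos_two_arctan, Real.cosh_eq, Real.sinh_eq, Real.exp_neg]
  have := Real.exp_pos y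
  field_simp
  ring

lemma aux_bound {l : Filter ℝ} (f g : ℝ → ℝ) (K : ℝ) (hf : Tendsto f l (nhds 0))
    (hg : ∀ r, |g r| ≤ K) : Tendsto (fun r => f r * g r) l (nhds 0) := by
  have h1 : Tendsto (fun r => |f r| * K) l (nhds 0) := by
    simpa using hf.abs.mul_const K
  refine squeeze_zero_norm (fun r => ?_) h1
  rw [Real.norm_eq_abs, abs_mul]
  exact mul_le_mul_of_nonneg_left (hg r) (abs_nonneg _)

/-- For any decaying `C²` solution `ψ` of `ψ'' − 2·cos(2H)·ψ = −2·r·H'`, one has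
`4·∫ sin(2H)·ψ·(H')² = −∫ (H')² = −2√2`, and hence the first-order eigenvalue coefficient
`c = 1 − 4·∫ sin(2H)·ψ·v₀²` (with `v₀ = 2^{−3/4}·H'`) equals `2`. -/
theorem eigenvalue_coefficient (H ψ : ℝ → ℝ)
    (hH : ∀ r, H r = 2 * Real.arctan (Real.exp (Real.sqrt 2 * r)))
    (hψ : ContDiff ℝ 2 ψ)
    (hψeq : ∀ r : ℝ, deriv (deriv ψ) r - 2 * Real.cos (2 * H r) * ψ r
        = -2 * r * deriv H r)
    (hψtop : Tendsto ψ atTop (nhds 0)) (hψbot : Tendsto ψ atBot (nhds 0))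
    (hψ'top : Tendsto (deriv ψ) atTop (nhds 0))
    (hψ'bot : Tendsto (deriv ψ) atBot (nhds 0)) :
    (4 * ∫ r : ℝ, Real.sin (2 * H r) * ψ r * (deriv H r) ^ 2
        = -∫ r : ℝ, (deriv H r) ^ 2) ∧
    ((∫ r : ℝ, (deriv H r) ^ 2) = 2 * Real.sqrt 2) ∧
    (1 - 4 * ∫ r : ℝ, Real.sin (2 * H r) * ψ r * ((2 : ℝ) ^ (-(3 : ℝ)/4) * deriv H r) ^ 2
        = 2) := by
  obtain ⟨s, hs⟩ : ∃ s, s = Real.sqrt 2 := ⟨_, rfl⟩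
  rw [← hs] at hH ⊢
  have hs2 : s ^ 2 = 2 := by rw [hs]; exact Real.sq_sqrt (by norm_num)
  have hs0 : 0 < s := by rw [hs]; positivity
  have hC : ∀ r, 1 ≤ Real.cosh (s * r) := fun r => Real.one_le_cosh _
  have hC0 : ∀ r, Real.cosh (s * r) ≠ 0 := fun r => (Real.cosh_pos _).ne'
  have hCS : ∀ r, Real.cosh (s * r) ^ 2 = Real.sinh (s * r) ^ 2 + 1 := fun r => Real.cosh_sq _
  have hsr : ∀ r : ℝ, HasDerivAt (fun r => s * r) s r := fun r => by
    simpa using (hasDerivAt_id r).const_mul s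
  have hc' : ∀ r, HasDerivAt (fun r => Real.cosh (s * r)) (Real.sinh (s * r) * s) r :=
    fun r => (hsr r).cosh
  have hsh' : ∀ r, HasDerivAt (fun r => Real.sinh (s * r)) (Real.cosh (s * r) * s) r :=
    fun r => (hsr r).sinh
  have hsin : ∀ r, Real.sin (H r) = 1 / Real.cosh (s * r) := fun r => by rw [hH, aux_sinH]
  have hcos : ∀ r, Real.cos (H r) = - Real.sinh (s * r) / Real.cosh (s * r) :=
    fun r => by rw [hH, aux_cosH]
  have hHd : ∀ r, HasDerivAt H (s / Real.cosh (s * r)) r := by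
    intro r
    have h1 := (((hsr r).exp).arctan).const_mul 2
    have h2 : H = fun r => 2 * Real.arctan (Real.exp (s * r)) := funext hH
    rw [h2]
    refine HasDerivAt.congr_deriv h1 ?_
    rw [Real.cosh_eq, Real.exp_neg]
    have := Real.exp_pos (s * r)
    field_simp
    ring
  have hdH : ∀ r, deriv H r = s / Real.cosh (s * r) := fun r => (hHd r).deriv
  have hsin2 : ∀ r, Real.sin (2 * H r) = -2 * Real.sinh (s * r) / Real.cosh (s * r) ^ 2 := by
    intro r
    rw [Real.sin_two_mul, hsin, hcos]
    have := hC0 r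
    field_simp
  have hh' : ∀ r, HasDerivAt (fun r => s / Real.cosh (s * r)) (Real.sin (2 * H r)) r := by
    intro r
    have h1 := (hasDerivAt_const r s).div (hc' r) (hC0 r)
    refine HasDerivAt.congr_deriv h1 ?_
    rw [hsin2]
    have := hC0 r
    field_simp
    linear_combination -(Real.sinh (s * r)) * hs2
  have hw' : ∀ r, HasDerivAt (fun r => Real.sin (2 * H r))
      (Real.cos (2 * H r) * (2 * (s / Real.cosh (s * r)))) r :=
    fun r => ((hHd r).const_mul 2).sin
  have hw'' : ∀ r, HasDerivAt (fun r => Real.cos (2 * H r) * (2 * (s / Real.cosh (s * r))))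
      (-Real.sin (2 * H r) * (2 * (s / Real.cosh (s * r))) * (2 * (s / Real.cosh (s * r)))
        + Real.cos (2 * H r) * (2 * Real.sin (2 * H r))) r :=
    fun r => (((hHd r).const_mul 2).cos).mul ((hh' r).const_mul 2)
  have hψ1 : ∀ r, HasDerivAt ψ (deriv ψ r) r :=
    fun r => (hψ.differentiable (by norm_num) r).hasDerivAt
  have hψ2 : ∀ r, HasDerivAt (deriv ψ) (deriv (deriv ψ) r) r := by
    have h1 : ContDiff ℝ 1 (deriv ψ) := by
      have h2 : ContDiff ℝ (1 + 1) ψ := by convert hψ using 1; norm_num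
      exact (contDiff_succ_iff_deriv.1 h2).2.2
    exact fun r => (h1.differentiable (by norm_num) r).hasDerivAt
  have hT : ∀ r, HasDerivAt (fun r => s * (Real.sinh (s * r) / Real.cosh (s * r)))
      ((s / Real.cosh (s * r)) ^ 2) r := by
    intro r
    have h1 := ((hsh' r).div (hc' r) (hC0 r)).const_mul s
    refine HasDerivAt.congr_deriv h1 ?_
    have := hC0 r
    field_simp
    linear_combination hCS r
  have hsrt : Tendsto (fun r : ℝ => s * r) atTop atTop := tendsto_id.const_mul_atTop hs0
  have hsrb : Tendsto (fun r : ℝ => s * r) atBot atBot := tendsto_id.const_mul_atBot hs0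
  have htanh_top : Tendsto (fun y => Real.sinh y / Real.cosh y) atTop (nhds 1) := by
    have h0 : Tendsto (fun y : ℝ => Real.exp (-y)) atTop (nhds 0) := Real.tendsto_exp_neg_atTop_nhds_zero
    have h1 : Tendsto (fun y : ℝ => (1 - Real.exp (-y) ^ 2) / (1 + Real.exp (-y) ^ 2)) atTop
        (nhds ((1 - 0 ^ 2) / (1 + 0 ^ 2))) :=
      ((h0.pow 2).const_sub 1).div ((h0.pow 2).const_add 1) (by norm_num)
    have h2 : ((1:ℝ) - 0 ^ 2) / (1 + 0 ^ 2) = 1 := by norm_num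
    rw [h2] at h1
    refine h1.congr (fun y => ?_)
    rw [Real.cosh_eq, Real.sinh_eq, Real.exp_neg]
    have := Real.exp_pos y
    field_simp
  have htanh_bot : Tendsto (fun y => Real.sinh y / Real.cosh y) atBot (nhds (-1)) := by
    have h1 := (htanh_top.comp tendsto_neg_atBot_atTop).neg
    refine h1.congr (fun y => ?_)
    simp [Real.sinh_neg, Real.cosh_neg, neg_div]
  have hTt : Tendsto (fun r => s * (Real.sinh (s * r) / Real.cosh (s * r))) atTop
      (nhds (s * 1)) := (htanh_top.comp hsrt).const_mul s
  have hTb : Tendsto (fun r => s * (Real.sinh (s * r) / Real.cosh (s * r))) atBot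
      (nhds (s * (-1))) := (htanh_bot.comp hsrb).const_mul s
  have hint : MeasureTheory.Integrable (fun r => (s / Real.cosh (s * r)) ^ 2) := by
    have h1 := MeasureTheory.integrableOn_Ioi_deriv_of_nonneg' (a := 0)
      (fun r _ => hT r) (fun r _ => sq_nonneg _) hTt
    have h2 : MeasureTheory.IntegrableOn (fun r => (s / Real.cosh (s * r)) ^ 2) (Set.Iic 0) := by
      have h3 := h1.comp_neg
      have h4 : MeasureTheory.IntegrableOn (fun r => (s / Real.cosh (s * r)) ^ 2) (Set.Iio 0) := by
        simpa using h3
      exact (integrableOn_Iic_iff_integrableOn_Iio (by simp)).2 h4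
    have h5 := h2.union h1
    rwa [Set.Iic_union_Ioi, MeasureTheory.integrableOn_univ] at h5
  have hI : ∫ r : ℝ, (s / Real.cosh (s * r)) ^ 2 = 2 * s := by
    rw [MeasureTheory.integral_of_hasDerivAt_of_tendsto hT hint hTb hTt]
    ring
  have hψc : Continuous ψ := hψ.continuous
  obtain ⟨K, hK⟩ : ∃ K, ∀ r, |ψ r| ≤ K := by
    have h0 : Tendsto ψ (cocompact ℝ) (nhds 0) := by
      rw [cocompact_eq_atBot_atTop]
      exact hψbot.sup hψtop
    let f : ZeroAtInftyContinuousMap ℝ ℝ := ⟨⟨ψ, hψc⟩, h0⟩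
    exact ⟨‖f.toBCF‖, fun r => f.toBCF.norm_coe_le_norm r⟩
  have hHc : Continuous H := continuous_iff_continuousAt.2 fun r => (hHd r).continuousAt
  have hint2 : MeasureTheory.Integrable
      (fun r => Real.sin (2 * H r) * ψ r * (s / Real.cosh (s * r)) ^ 2) := by
    refine hint.bdd_mul (c := K) ?_ (Filter.Eventually.of_forall fun r => ?_)
    · exact (by fun_prop : Continuous fun r => Real.sin (2 * H r) * ψ r).aestronglyMeasurable
    · rw [Real.norm_eq_abs, abs_mul]
      calc _ ≤ 1 * |ψ r| := mul_le_mul_of_nonneg_right (Real.abs_sin_le_one _) (abs_nonneg _)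
        _ ≤ K := by rw [one_mul]; exact hK r
  have hG : ∀ r, HasDerivAt (fun r => ψ r * (Real.cos (2 * H r) * (2 * (s / Real.cosh (s * r))))
        - deriv ψ r * Real.sin (2 * H r) - r * (s / Real.cosh (s * r)) ^ 2)
      (-(4 * (Real.sin (2 * H r) * ψ r * (s / Real.cosh (s * r)) ^ 2))
        - (s / Real.cosh (s * r)) ^ 2) r := by
    intro r
    have h1 := (((hψ1 r).mul (hw'' r)).sub ((hψ2 r).mul (hw' r))).sub
      ((hasDerivAt_id r).mul ((hh' r).pow 2))
    refine HasDerivAt.congr_deriv h1 ?_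
    have h2 := hψeq r
    rw [hdH] at h2
    simp
    linear_combination -(Real.sin (2 * H r)) * h2
  have hinv : ∀ r : ℝ, ‖r * (s / Real.cosh (s * r)) ^ 2‖ ≤ |r⁻¹| := by
    intro r
    have h1 : (s * r) ^ 2 ≤ Real.sinh (s * r) ^ 2 := by
      rw [sq_le_sq, Real.abs_sinh]
      exact Real.self_le_sinh_iff.2 (abs_nonneg _)
    have h2 : 2 * |r| ^ 2 ≤ Real.cosh (s * r) ^ 2 := by
      rw [sq_abs, hCS]; nlinarith
    rcases eq_or_ne r 0 with h | h
    · simp [h]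
    · have hr : 0 < |r| := abs_pos.2 h
      rw [Real.norm_eq_abs, abs_mul, abs_of_nonneg (sq_nonneg (s / Real.cosh (s * r))), div_pow,
        hs2, abs_inv, ← mul_div_assoc, div_le_iff₀ (by have := hC r; positivity)]
      rw [inv_mul_eq_div, le_div_iff₀ hr]
      linarith
  have hhb : ∀ r, |Real.cos (2 * H r) * (2 * (s / Real.cosh (s * r)))| ≤ 2 * s := by
    intro r
    have h0 : 0 ≤ s / Real.cosh (s * r) := div_nonneg hs0.le (by linarith [hC r])
    have h1 : s / Real.cosh (s * r) ≤ s := div_le_self hs0.le (hC r)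
    rw [abs_mul, abs_of_nonneg (by positivity : 0 ≤ 2 * (s / Real.cosh (s * r)))]
    have := Real.abs_cos_le_one (2 * H r)
    nlinarith [abs_nonneg (Real.cos (2 * H r))]
  have hGt : ∀ l : Filter ℝ, Tendsto ψ l (nhds 0) → Tendsto (deriv ψ) l (nhds 0) →
      Tendsto (fun r : ℝ => r⁻¹) l (nhds 0) →
      Tendsto (fun r => ψ r * (Real.cos (2 * H r) * (2 * (s / Real.cosh (s * r))))
        - deriv ψ r * Real.sin (2 * H r) - r * (s / Real.cosh (s * r)) ^ 2) l (nhds 0) := by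
    intro l h1 h2 h3
    have a1 := aux_bound _ _ _ h1 hhb
    have a2 := aux_bound _ _ _ h2 (fun r => Real.abs_sin_le_one (2 * H r))
    have a3 : Tendsto (fun r => r * (s / Real.cosh (s * r)) ^ 2) l (nhds 0) :=
      squeeze_zero_norm hinv (by simpa using h3.abs)
    simpa using (a1.sub a2).sub a3
  have key := MeasureTheory.integral_of_hasDerivAt_of_tendsto hG
    ((hint2.const_mul 4).neg.sub hint)
    (hGt _ hψbot hψ'bot tendsto_inv_atBot_zero) (hGt _ hψtop hψ'top tendsto_inv_atTop_zero)
  have hn : MeasureTheory.Integrable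
      (fun r => -(4 * (Real.sin (2 * H r) * ψ r * (s / Real.cosh (s * r)) ^ 2))) :=
    (hint2.const_mul 4).neg
  rw [MeasureTheory.integral_sub hn hint, MeasureTheory.integral_neg,
    MeasureTheory.integral_const_mul, hI] at key
  simp only [hdH]
  have hp : ((2:ℝ) ^ (-(3:ℝ)/4)) ^ 2 * s * 2 = 1 := by
    rw [hs, Real.sqrt_eq_rpow, ← Real.rpow_natCast, ← Real.rpow_mul (by norm_num),
      ← Real.rpow_add (by norm_num)]
    have h : (-(3:ℝ)/4 * ((2:ℕ):ℝ) + 1 / 2) = -1 := by norm_num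
    rw [h, Real.rpow_neg_one]
    norm_num
  refine ⟨by rw [hI]; linarith, hI, ?_⟩
  have h9 : ∀ r, Real.sin (2 * H r) * ψ r * ((2:ℝ) ^ (-(3:ℝ)/4) * (s / Real.cosh (s * r))) ^ 2
      = ((2:ℝ) ^ (-(3:ℝ)/4)) ^ 2 * (Real.sin (2 * H r) * ψ r * (s / Real.cosh (s * r)) ^ 2) := by
    intro r; ring
  simp only [h9]
  rw [MeasureTheory.integral_const_mul]
  linear_combination ((2:ℝ) ^ (-(3:ℝ)/4)) ^ 2 * key + hp
end

section
/- Let a > 0, let n be a positive integer, and let φ : ℝ → ℝ be an n-kink. Then there exists a constant c > 0 such that lim_{r→+∞} r·exp(√2·r)·( n·π − φ(r) ) = c, i.e. φ(r) behaves as n·π − (c/r)·exp(−√2·r) as r → +∞. -/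
open Real Filter

lemma mono_aux (f f' : ℝ → ℝ) (R : ℝ) (h : ∀ x, R ≤ x → HasDerivAt f (f' x) x)
    (h0 : ∀ x, R ≤ x → 0 ≤ f' x) : MonotoneOn f (Set.Ici R) := by
  apply monotoneOn_of_hasDerivWithinAt_nonneg (f' := f') (convex_Ici R)
  · intro x hx
    exact (h x hx).continuousAt.continuousWithinAt
  · intro x hx
    rw [interior_Ici] at hx
    exact (h x (le_of_lt hx)).hasDerivWithinAt
  · intro x hx
    rw [interior_Ici] at hx
    exact h0 x (le_of_lt hx)

lemma anti_aux (f f' : ℝ → ℝ) (R : ℝ) (h : ∀ x, R ≤ x → HasDerivAt f (f' x) x)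
    (h0 : ∀ x, R ≤ x → f' x ≤ 0) : AntitoneOn f (Set.Ici R) := by
  have := (mono_aux (fun x => - f x) (fun x => - f' x) R (fun x hx => (h x hx).neg)
    (fun x hx => by linarith [h0 x hx])).neg
  simpa using this

/-- Asymptotics of a positive bounded solution of a perturbed linear equation. -/
lemma linear_asymp (u W Q : ℝ → ℝ) (R K C : ℝ) (hR : 0 < R) (hK : 0 ≤ K)
    (hu : ∀ r, R ≤ r → HasDerivAt u (W r) r)
    (hW : ∀ r, R ≤ r → HasDerivAt W (Q r) r)
    (hpos : ∀ r, R ≤ r → 0 < u r)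
    (hC : ∀ r, R ≤ r → u r ≤ C)
    (hQ1 : ∀ r, R ≤ r → 2 * u r ≤ Q r)
    (hQ2 : ∀ r, R ≤ r → Q r ≤ 2 * u r + K / r ^ 4 * u r) :
    ∃ c : ℝ, 0 < c ∧ Tendsto (fun r => exp (√2 * r) * u r) atTop (nhds c) := by
  set k : ℝ := √2 with hk
  have hk2 : k * k = 2 := by rw [hk]; exact Real.mul_self_sqrt (by norm_num)
  have hk0 : 0 < k := by rw [hk]; positivity
  have hexp : ∀ (b r : ℝ), HasDerivAt (fun r => exp (b * r)) (b * exp (b * r)) r := by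
    intro b r
    have := ((hasDerivAt_id r).const_mul b).exp
    simpa [mul_comm] using this
  have hD : ∀ r, R ≤ r → HasDerivAt (fun r => W r + k * u r) (Q r + k * W r) r :=
    fun r hr => (hW r hr).add ((hu r hr).const_mul k)
  -- exp(-kr) D is monotone
  have hmono : MonotoneOn (fun r => exp (-k * r) * (W r + k * u r)) (Set.Ici R) := by
    apply mono_aux _ (fun r => exp (-k * r) * (Q r - 2 * u r))
    · intro r hr
      refine HasDerivAt.congr_deriv ((hexp (-k) r).mul (hD r hr)) ?_
      linear_combination (-exp (-k * r) * u r) * hk2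
    · intro r hr
      have := hQ1 r hr
      exact mul_nonneg (exp_pos _).le (by linarith)
  have hDneg : ∀ r, R ≤ r → W r + k * u r ≤ 0 := by
    intro r0 hr0
    by_contra hcon
    push Not at hcon
    set δ := exp (-k * r0) * (W r0 + k * u r0) with hδ
    have hδ0 : 0 < δ := mul_pos (exp_pos _) hcon
    have hge : ∀ r, r0 ≤ r → δ * exp (k * r) ≤ W r + k * u r := by
      intro r hr
      have h1 : δ ≤ exp (-k * r) * (W r + k * u r) :=
        hmono (Set.mem_Ici.2 hr0) (Set.mem_Ici.2 (hr0.trans hr)) hr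
      have h2 : exp (-k * r) * exp (k * r) = 1 := by
        rw [← exp_add]; simp
      have h3 := mul_le_mul_of_nonneg_right h1 (exp_pos (k * r)).le
      calc _ ≤ _ := h3
        _ = (exp (-k * r) * exp (k * r)) * (W r + k * u r) := by ring
        _ = _ := by rw [h2, one_mul]
    have hev : ∀ᶠ r in atTop, 1 + k * C ≤ δ * exp (k * r) := by
      have : Tendsto (fun r => δ * exp (k * r)) atTop atTop :=
        (tendsto_exp_atTop.comp (tendsto_id.const_mul_atTop hk0)).const_mul_atTop hδ0
      exact this.eventually_ge_atTop _
    obtain ⟨r1, hr1⟩ := eventually_atTop.1 hev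
    set r2 := max r0 r1
    have hr2 : R ≤ r2 := hr0.trans (le_max_left _ _)
    have hm : MonotoneOn (fun r => u r - r) (Set.Ici r2) := by
      apply mono_aux _ (fun r => W r - 1)
      · intro r hr
        exact (hu r (hr2.trans hr)).sub (hasDerivAt_id r)
      · intro r hr
        have h1 := hge r ((le_max_left _ _).trans hr)
        have h2 := hr1 r ((le_max_right _ _).trans hr)
        have h3 := mul_le_mul_of_nonneg_left (hC r (hr2.trans hr)) hk0.le
        linarith
    have hCpos : 0 < C := (hpos r2 hr2).trans_le (hC r2 hr2)
    have h4 := hm (Set.mem_Ici.2 le_rfl) (Set.mem_Ici.2 (by linarith : r2 ≤ r2 + C))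
      (by linarith : r2 ≤ r2 + C)
    have h5 := hC (r2 + C) (by linarith)
    have h6 := hpos r2 hr2
    simp only at h4
    linarith
  -- z
  set z : ℝ → ℝ := fun r => exp (k * r) * u r with hz
  have hzpos : ∀ r, R ≤ r → 0 < z r := fun r hr => mul_pos (exp_pos _) (hpos r hr)
  set y : ℝ → ℝ := fun r => -(exp (k * r) * (W r + k * u r)) with hy
  have hzd : ∀ r, R ≤ r → HasDerivAt z (- y r) r := by
    intro r hr
    refine HasDerivAt.congr_deriv ((hexp k r).mul (hu r hr)) ?_
    simp only [hy]; ring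
  have hyd : ∀ r, R ≤ r → HasDerivAt y (2 * k * y r - exp (k * r) * (Q r - 2 * u r)) r := by
    intro r hr
    refine HasDerivAt.congr_deriv (((hexp k r).mul (hD r hr)).neg) ?_
    simp only [hy]
    linear_combination (exp (k * r) * u r) * hk2
  have hy0 : ∀ r, R ≤ r → 0 ≤ y r := by
    intro r hr
    have := mul_nonneg (exp_pos (k * r)).le (neg_nonneg.2 (hDneg r hr))
    simp only [hy]; linarith
  have hzanti : AntitoneOn z (Set.Ici R) :=
    anti_aux z (fun r => - y r) R hzd (fun r hr => by linarith [hy0 r hr])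
  have hyup : ∀ r, R ≤ r → y r ≤ K / r ^ 4 * z r / (2 * k) := by
    intro r0 hr0
    by_contra hcon
    push Not at hcon
    set m := K / r0 ^ 4 * z r0 / (2 * k) with hm
    have hr00 : 0 < r0 := hR.trans_le hr0
    have hm0 : 0 ≤ m := by
      have := (hzpos r0 hr0).le
      positivity
    have hq : ∀ r, r0 ≤ r → exp (k * r) * (Q r - 2 * u r) ≤ 2 * k * m := by
      intro r hr
      have h1 : exp (k * r) * (Q r - 2 * u r) ≤ K / r ^ 4 * z r := by
        have := mul_le_mul_of_nonneg_left (hQ2 r (hr0.trans hr)) (exp_pos (k * r)).le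
        simp only [hz]; linarith
      have h2 : z r ≤ z r0 := hzanti (Set.mem_Ici.2 hr0) (Set.mem_Ici.2 (hr0.trans hr)) hr
      have h3 : K / r ^ 4 ≤ K / r0 ^ 4 := by gcongr
      have h4 : K / r ^ 4 * z r ≤ K / r0 ^ 4 * z r0 :=
        mul_le_mul h3 h2 (hzpos r (hr0.trans hr)).le (by positivity)
      have h5 : 2 * k * m = K / r0 ^ 4 * z r0 := by rw [hm]; field_simp
      linarith
    have hmm : MonotoneOn (fun r => exp (-(2 * k) * r) * (y r - m)) (Set.Ici r0) := by
      apply mono_aux _ (fun r => exp (-(2 * k) * r) *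
        (2 * k * m - exp (k * r) * (Q r - 2 * u r)))
      · intro r hr
        refine HasDerivAt.congr_deriv ((hexp (-(2 * k)) r).mul ((hyd r (hr0.trans hr)).sub_const m)) ?_
        ring
      · intro r hr
        exact mul_nonneg (exp_pos _).le (by linarith [hq r hr])
    have hyge : ∀ r, r0 ≤ r → y r0 ≤ y r := by
      intro r hr
      have h1 : exp (-(2 * k) * r0) * (y r0 - m) ≤ exp (-(2 * k) * r) * (y r - m) :=
        hmm (Set.mem_Ici.2 le_rfl) (Set.mem_Ici.2 hr) hr
      have h2 : exp (-(2 * k) * r) ≤ exp (-(2 * k) * r0) := by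
        apply exp_le_exp.2; nlinarith
      have h3 := mul_le_mul_of_nonneg_right h2 (by linarith : 0 ≤ y r0 - m)
      have h4 := le_of_mul_le_mul_left (h3.trans h1) (exp_pos _)
      linarith
    have hy00 : 0 < y r0 := by linarith
    have ha : AntitoneOn (fun r => z r + y r0 * r) (Set.Ici r0) := by
      apply anti_aux _ (fun r => - y r + y r0 * 1)
      · intro r hr
        exact (hzd r (hr0.trans hr)).add ((hasDerivAt_id r).const_mul _)
      · intro r hr
        linarith [hyge r hr]
    have hle : r0 ≤ r0 + z r0 / y r0 := by
      have := div_pos (hzpos r0 hr0) hy00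
      linarith
    have h1 := ha (Set.mem_Ici.2 le_rfl) (Set.mem_Ici.2 hle) hle
    have h2 := hzpos _ (hr0.trans hle)
    have h3 : y r0 * (r0 + z r0 / y r0) = y r0 * r0 + z r0 := by field_simp
    simp only [h3] at h1
    linarith
  -- lower bound
  set L := K / (6 * k) with hL
  have hL0 : 0 ≤ L := by positivity
  have hlow : MonotoneOn (fun r => exp (-(L / r ^ 3)) * z r) (Set.Ici R) := by
    apply mono_aux _ (fun r => exp (-(L / r ^ 3)) * (K / r ^ 4 * z r / (2 * k) - y r))
    · intro r hr
      have hr0 : r ≠ 0 := (hR.trans_le hr).ne'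
      have h1 : HasDerivAt (fun r : ℝ => -(L / r ^ 3)) (3 * L / r ^ 4) r := by
        refine HasDerivAt.congr_deriv (((hasDerivAt_const r L).div (hasDerivAt_pow 3 r) (pow_ne_zero 3 hr0)).neg) ?_
        field_simp
        norm_num
        ring
      refine HasDerivAt.congr_deriv (h1.exp.mul (hzd r hr)) ?_
      rw [hL]
      field_simp
      ring
    · intro r hr
      exact mul_nonneg (exp_pos _).le (by linarith [hyup r hr])
  set c0 := exp (-(L / R ^ 3)) * z R with hc0
  have hc00 : 0 < c0 := mul_pos (exp_pos _) (hzpos R le_rfl)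
  have hzlow : ∀ r, R ≤ r → c0 ≤ z r := by
    intro r hr
    have h1 : c0 ≤ exp (-(L / r ^ 3)) * z r := hlow (Set.mem_Ici.2 le_rfl) (Set.mem_Ici.2 hr) hr
    have h2 : exp (-(L / r ^ 3)) ≤ 1 := by
      apply exp_le_one_iff.2
      have := hR.trans_le hr
      have : 0 ≤ L / r ^ 3 := by positivity
      linarith
    nlinarith [hzpos r hr]
  have hanti : Antitone (fun r => z (max R r)) := by
    intro r s hrs
    exact hzanti (Set.mem_Ici.2 (le_max_left _ _)) (Set.mem_Ici.2 (le_max_left _ _))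
      (max_le_max le_rfl hrs)
  have hb : BddBelow (Set.range (fun r => z (max R r))) :=
    ⟨c0, by rintro _ ⟨r, rfl⟩; exact hzlow _ (le_max_left _ _)⟩
  have ht := tendsto_atTop_ciInf hanti hb
  refine ⟨_, lt_of_lt_of_le hc00 (le_ciInf fun r => hzlow _ (le_max_left R r)), ?_⟩
  refine ht.congr' ?_
  filter_upwards [eventually_ge_atTop R] with r hr
  simp [max_eq_right hr, hz]

theorem nkink_asymptotics (a : ℝ) (ha : 0 < a) (n : ℕ) (hn : 0 < n)
    (φ : ℝ → ℝ)
    (hφ : ContDiff ℝ 2 φ)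
    (hφeq : ∀ r : ℝ, deriv (deriv φ) r + (2 * r / (r ^ 2 + a ^ 2)) * deriv φ r
        = Real.sin (2 * φ r))
    (hbot : Tendsto φ atBot (nhds 0))
    (htop : Tendsto φ atTop (nhds (n * Real.pi))) :
    ∃ c : ℝ, 0 < c ∧
      Tendsto (fun r : ℝ => r * Real.exp (Real.sqrt 2 * r) * (n * Real.pi - φ r))
        atTop (nhds c) := by
  have hnpi : 0 < (n : ℝ) * π := by
    have : (0 : ℝ) < n := by exact_mod_cast hn
    positivity
  have hC1 : ContDiff ℝ 1 (deriv φ) := by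
    have : ContDiff ℝ (1 + 1) φ := by simpa [one_add_one_eq_two] using hφ
    exact (contDiff_succ_iff_deriv.1 this).2.2
  have hd1 : ∀ r, HasDerivAt φ (deriv φ r) r := fun r =>
    ((hφ.differentiable (by norm_num)) r).hasDerivAt
  have hd2 : ∀ r, HasDerivAt (deriv φ)
      (sin (2 * φ r) - (2 * r / (r ^ 2 + a ^ 2)) * deriv φ r) r := fun r =>
    ((hC1.differentiable (by norm_num)) r).hasDerivAt.congr_deriv (by linarith [hφeq r])
  have hdcont : Continuous (deriv φ) := hC1.continuous
  have hden : ∀ r : ℝ, 0 < r ^ 2 + a ^ 2 := fun r => by positivity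
  -- energy
  set E : ℝ → ℝ := fun r => (deriv φ r) ^ 2 / 2 - sin (φ r) ^ 2 with hE
  have hEd : ∀ r, HasDerivAt E (-(2 * r / (r ^ 2 + a ^ 2) * (deriv φ r) ^ 2)) r := by
    intro r
    refine HasDerivAt.congr_deriv ((((hd2 r).pow 2).div_const 2).sub ((hd1 r).sin.pow 2)) ?_
    rw [sin_two_mul]
    push_cast
    ring
  have hs_top : Tendsto (fun r => sin (φ r) ^ 2) atTop (nhds 0) := by
    have := ((continuous_sin.tendsto _).comp htop).pow 2
    simpa [sin_nat_mul_pi] using this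
  have hs_bot : Tendsto (fun r => sin (φ r) ^ 2) atBot (nhds 0) := by
    have := ((continuous_sin.tendsto _).comp hbot).pow 2
    simpa using this
  have hE0 : ∀ r, 0 ≤ E r := by
    intro r0
    by_contra hcon
    push Not at hcon
    rcases le_total 0 r0 with h | h
    · have hanti : AntitoneOn E (Set.Ici r0) := by
        refine anti_aux _ _ _ (fun r _ => hEd r) ?_
        intro r hr
        have : 0 ≤ r := h.trans hr
        have : 0 ≤ 2 * r / (r ^ 2 + a ^ 2) * deriv φ r ^ 2 := by positivity
        linarith
      have hev := hs_top.eventually_lt_const (by linarith : 0 < - E r0)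
      obtain ⟨r, hr1, hr2⟩ := (hev.and (eventually_ge_atTop r0)).exists
      have h1 : E r ≤ E r0 := hanti (Set.mem_Ici.2 le_rfl) (Set.mem_Ici.2 hr2) hr2
      have h2 : - sin (φ r) ^ 2 ≤ E r := by
        simp only [hE]; nlinarith [sq_nonneg (deriv φ r)]
      linarith
    · have hanti : AntitoneOn (fun r => E (-r)) (Set.Ici (-r0)) := by
        refine anti_aux _ (fun r => -(-(2 * (-r) / ((-r) ^ 2 + a ^ 2) * (deriv φ (-r)) ^ 2)))
          _ (fun r _ => ?_) ?_
        · refine HasDerivAt.congr_deriv ((hEd (-r)).comp r (hasDerivAt_neg r)) ?_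
          ring
        · intro r hr
          have : 0 ≤ r := by linarith
          have : 0 ≤ 2 * r / ((-r) ^ 2 + a ^ 2) * deriv φ (-r) ^ 2 := by positivity
          have h3 : -(-(2 * (-r) / ((-r) ^ 2 + a ^ 2) * (deriv φ (-r)) ^ 2))
            = -(2 * r / ((-r) ^ 2 + a ^ 2) * deriv φ (-r) ^ 2) := by ring
          rw [h3]
          linarith
      have hev := hs_bot.eventually_lt_const (by linarith : 0 < - E r0)
      obtain ⟨r, hr1, hr2⟩ := (hev.and (eventually_le_atBot r0)).exists
      have h1 := hanti (Set.mem_Ici.2 le_rfl) (Set.mem_Ici.2 (by linarith : -r0 ≤ -r))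
        (by linarith : -r0 ≤ -r)
      simp only [neg_neg] at h1
      have h2 : - sin (φ r) ^ 2 ≤ E r := by
        simp only [hE]; nlinarith [sq_nonneg (deriv φ r)]
      linarith
  have hEineq : ∀ r, 2 * sin (φ r) ^ 2 ≤ deriv φ r ^ 2 := by
    intro r
    have := hE0 r
    simp only [hE] at this
    linarith
  -- the derivative does not vanish
  have hne : ∀ r, deriv φ r ≠ 0 := by
    intro r0 h0
    have hs : sin (φ r0) = 0 := by
      have := hEineq r0
      rw [h0] at this
      have h1 : sin (φ r0) ^ 2 = 0 := le_antisymm (by linarith) (sq_nonneg _)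
      exact pow_eq_zero_iff (two_ne_zero) |>.1 h1
    obtain ⟨j, hj⟩ := sin_eq_zero_iff.1 hs
    set F : ℝ → ℝ := fun r => (φ r - φ r0) ^ 2 + (deriv φ r) ^ 2 with hF
    set F' : ℝ → ℝ := fun r => 2 * (φ r - φ r0) * deriv φ r
      + 2 * deriv φ r * (sin (2 * φ r) - (2 * r / (r ^ 2 + a ^ 2)) * deriv φ r) with hF'
    have hFd : ∀ r, HasDerivAt F (F' r) r := by
      intro r
      refine HasDerivAt.congr_deriv ((((hd1 r).sub_const (φ r0)).pow 2).add ((hd2 r).pow 2)) ?_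
      simp only [hF']
      push_cast
      ring
    set B : ℝ := 3 + 2 / a with hB
    have hFb : ∀ r, |F' r| ≤ B * F r := by
      intro r
      have h1 : |sin (2 * φ r)| ≤ 2 * |φ r - φ r0| := by
        have : sin (2 * φ r) = sin (2 * (φ r - φ r0)) := by
          have : 2 * (φ r - φ r0) = 2 * φ r - j * (2 * π) := by rw [← hj]; ring
          rw [this, sin_sub_int_mul_two_pi]
        rw [this]
        refine (abs_sin_le_abs).trans ?_
        rw [abs_mul]; norm_num
      have h2 : |2 * r / (r ^ 2 + a ^ 2)| ≤ 1 / a := by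
        rw [abs_div, abs_of_pos (hden r), div_le_div_iff₀ (hden r) ha, abs_mul, abs_two]
        nlinarith [sq_nonneg (|r| - a), sq_abs r]
      have h3 : |F' r| ≤ 2 * |φ r - φ r0| * |deriv φ r| +
          2 * |deriv φ r| * (2 * |φ r - φ r0| + 1 / a * |deriv φ r|) := by
        simp only [hF']
        refine (abs_add_le _ _).trans ?_
        rw [abs_mul, abs_mul, abs_mul, abs_mul, abs_two]
        have h4 : |sin (2 * φ r) - 2 * r / (r ^ 2 + a ^ 2) * deriv φ r| ≤
          2 * |φ r - φ r0| + 1 / a * |deriv φ r| := by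
          refine (abs_sub _ _).trans ?_
          rw [abs_mul]
          have := mul_le_mul_of_nonneg_right h2 (abs_nonneg (deriv φ r))
          linarith
        gcongr
      refine h3.trans ?_
      simp only [hF, hB]
      rw [← sq_abs (φ r - φ r0), ← sq_abs (deriv φ r)]
      have h5 : 0 ≤ 1 / a := by positivity
      have h6 : 2 / a = 2 * (1 / a) := by ring
      rw [h6]
      have h7 := mul_nonneg h5 (sq_nonneg |φ r - φ r0|)
      nlinarith [sq_nonneg (|φ r - φ r0| - |deriv φ r|)]
    have hF0 : F r0 = 0 := by simp [hF, h0]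
    have hFnn : ∀ r, 0 ≤ F r := fun r => by simp only [hF]; positivity
    have hexp : ∀ (b r : ℝ), HasDerivAt (fun r => exp (b * r)) (b * exp (b * r)) r := by
      intro b r
      have := ((hasDerivAt_id r).const_mul b).exp
      simpa [mul_comm] using this
    have hFz : ∀ r, F r = 0 := by
      intro r
      rcases le_total r0 r with h | h
      · have hm : AntitoneOn (fun r => exp (-B * r) * F r) (Set.Ici r0) := by
          refine anti_aux _ _ _ (fun r _ => (hexp (-B) r).mul (hFd r)) ?_
          intro r _
          have := (abs_le.1 (hFb r)).2
          have := mul_nonneg (exp_pos (-B * r)).le (by linarith : 0 ≤ B * F r - F' r)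
          linarith
        have h1 := hm (Set.mem_Ici.2 le_rfl) (Set.mem_Ici.2 h) h
        simp only [hF0, mul_zero] at h1
        have h2 := hFnn r
        nlinarith [exp_pos (-B * r)]
      · have hm : Monotone (fun r => exp (B * r) * F r) := by
          refine monotone_of_hasDerivAt_nonneg (fun r => (hexp B r).mul (hFd r)) ?_
          intro r
          have := (abs_le.1 (hFb r)).1
          have := mul_nonneg (exp_pos (B * r)).le (by linarith : 0 ≤ B * F r + F' r)
          simp only [Pi.zero_apply]
          linarith
        have h1 := hm h
        simp only [hF0, mul_zero] at h1
        have h2 := hFnn r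
        nlinarith [exp_pos (B * r)]
    have hconst : ∀ r, φ r = φ r0 := by
      intro r
      have h1 := hFz r
      simp only [hF] at h1
      nlinarith [sq_nonneg (φ r - φ r0), sq_nonneg (deriv φ r)]
    have hfun : φ = fun _ => φ r0 := funext hconst
    rw [hfun] at hbot htop
    have h1 := tendsto_nhds_unique hbot tendsto_const_nhds
    have h2 := tendsto_nhds_unique htop tendsto_const_nhds
    linarith
  have hpos : ∀ r, 0 < deriv φ r := by
    by_contra hcon
    push Not at hcon
    obtain ⟨r0, hr0⟩ := hcon
    have hneg : ∀ r, deriv φ r ≤ 0 := by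
      intro r
      by_contra hr
      push Not at hr
      have := mem_range_of_exists_le_of_exists_ge hdcont ⟨r0, hr0⟩ ⟨r, hr.le⟩
      obtain ⟨s, hs⟩ := this
      exact hne s hs
    have hanti : Antitone φ :=
      antitone_of_hasDerivAt_nonpos hd1 hneg
    have h1 : φ 0 ≤ 0 := hanti.ge_of_tendsto hbot 0
    have h2 : (n : ℝ) * π ≤ φ 0 := hanti.le_of_tendsto htop 0
    linarith
  have hmono : StrictMono φ := strictMono_of_deriv_pos hpos
  have hlt : ∀ r, φ r < n * π := fun r =>
    (hmono (lt_add_one r)).trans_le (hmono.monotone.ge_of_tendsto htop (r + 1))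
  -- decay
  set ψ : ℝ → ℝ := fun r => n * π - φ r with hψ
  have hψpos : ∀ r, 0 < ψ r := fun r => sub_pos.2 (hlt r)
  have hψd : ∀ r, HasDerivAt ψ (- deriv φ r) r := fun r => (hd1 r).const_sub _
  have hψ0 : Tendsto ψ atTop (nhds 0) := by
    have := htop.const_sub (n * π)
    simpa using this
  have hsin2 : ∀ r, sin (2 * φ r) = - sin (2 * ψ r) := by
    intro r
    have : 2 * φ r = (n : ℕ) * (2 * π) - 2 * ψ r := by simp only [hψ]; ring
    rw [this, sin_nat_mul_two_pi_sub]
  have hsinsq : ∀ r, sin (φ r) ^ 2 = sin (ψ r) ^ 2 := by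
    intro r
    have h1 := cos_two_mul (φ r)
    have h2 := cos_two_mul (ψ r)
    have : 2 * φ r = (n : ℕ) * (2 * π) - 2 * ψ r := by simp only [hψ]; ring
    have h3 : cos (2 * φ r) = cos (2 * ψ r) := by
      rw [this, cos_nat_mul_two_pi_sub]
    have h4 := sin_sq_add_cos_sq (φ r)
    have h5 := sin_sq_add_cos_sq (ψ r)
    linarith
  obtain ⟨R0, hR0⟩ := eventually_atTop.1 (hψ0.eventually_lt_const (by norm_num : (0:ℝ) < 1 / 2))
  have hdecay : ∀ r, R0 ≤ r → ψ r ≤ deriv φ r := by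
    intro r hr
    have h1 := hR0 r hr
    have h2 := sin_gt_sub_cube (hψpos r)
    have h3 : 3 / 4 * ψ r ≤ sin (ψ r) := by
      have h0 := hψpos r
      have : ψ r ^ 3 ≤ ψ r := by
        have : ψ r ^ 2 ≤ 1 := by nlinarith
        nlinarith
      linarith
    have h4 := hEineq r
    rw [hsinsq] at h4
    have h5 : (3 / 4 * ψ r) ^ 2 ≤ sin (ψ r) ^ 2 :=
      pow_le_pow_left₀ (by linarith [hψpos r]) h3 2
    exact le_of_sq_le_sq (by nlinarith) (hpos r).le
  have hanti : AntitoneOn (fun r => exp r * ψ r) (Set.Ici R0) := by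
    refine anti_aux _ _ _ (fun r _ => (hasDerivAt_exp r).mul (hψd r)) ?_
    intro r hr
    have := mul_nonneg (exp_pos r).le (by linarith [hdecay r hr] : 0 ≤ deriv φ r - ψ r)
    linarith
  have hψle : ∀ r, R0 ≤ r → ψ r ≤ (exp R0 * ψ R0) * exp (-r) := by
    intro r hr
    have h1 : exp r * ψ r ≤ exp R0 * ψ R0 := hanti (Set.mem_Ici.2 le_rfl) (Set.mem_Ici.2 hr) hr
    have h2 := mul_le_mul_of_nonneg_right h1 (exp_pos (-r)).le
    have h3 : exp r * exp (-r) = 1 := by rw [← exp_add]; simp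
    calc ψ r = (exp r * exp (-r)) * ψ r := by rw [h3, one_mul]
      _ = exp r * ψ r * exp (-r) := by ring
      _ ≤ _ := h2
  have hsmall : Tendsto (fun r => (r ^ 2 + a ^ 2) * ψ r) atTop (nhds 0) := by
    have h1 : Tendsto (fun r : ℝ => (exp R0 * ψ R0) * (r ^ 2 * exp (-r) + a ^ 2 * exp (-r)))
        atTop (nhds 0) := by
      have h2 := tendsto_pow_mul_exp_neg_atTop_nhds_zero 2
      have h3 := (tendsto_exp_neg_atTop_nhds_zero).const_mul (a ^ 2)
      have := (h2.add h3).const_mul (exp R0 * ψ R0)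
      simpa using this
    refine tendsto_of_tendsto_of_tendsto_of_le_of_le' tendsto_const_nhds h1 ?_ ?_
    · exact Eventually.of_forall fun r => mul_nonneg (hden r).le (hψpos r).le
    · filter_upwards [eventually_ge_atTop R0] with r hr
      have := mul_le_mul_of_nonneg_left (hψle r hr) (hden r).le
      linarith
  obtain ⟨R1, hR1⟩ := eventually_atTop.1
    (hsmall.eventually_lt_const (by positivity : (0:ℝ) < a / 2))
  set R : ℝ := max (max R0 R1) 1 with hR
  have hRR0 : R0 ≤ R := (le_max_left _ _).trans (le_max_left _ _)
  have hRR1 : R1 ≤ R := (le_max_right _ _).trans (le_max_left _ _)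
  have hR1' : 1 ≤ R := le_max_right _ _
  set S : ℝ → ℝ := fun r => √(r ^ 2 + a ^ 2) with hS
  have hSpos : ∀ r, 0 < S r := fun r => Real.sqrt_pos.2 (hden r)
  have hSsq : ∀ r, S r ^ 2 = r ^ 2 + a ^ 2 := fun r => Real.sq_sqrt (hden r).le
  have hSd : ∀ r, HasDerivAt S (r / S r) r := by
    intro r
    have h1 : HasDerivAt (fun r : ℝ => r ^ 2 + a ^ 2) (2 * r) r := by
      simpa using (hasDerivAt_pow 2 r).add_const (a ^ 2)
    refine (h1.sqrt (hden r).ne').congr_deriv ?_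
    simp only [hS]
    rw [mul_div_mul_left _ _ two_ne_zero]
  obtain ⟨c, hc, hlim⟩ := linear_asymp (fun r => S r * ψ r)
    (fun r => r / S r * ψ r + S r * (- deriv φ r))
    (fun r => S r * sin (2 * ψ r) + a ^ 2 / S r ^ 3 * ψ r) R (a ^ 2) (a / 2)
    (by linarith) (by positivity)
    (fun r _ => (hSd r).mul (hψd r))
    (by
      intro r _
      have hSne := (hSpos r).ne'
      refine ((((hasDerivAt_id r).div (hSd r) hSne).mul (hψd r)).add
        ((hSd r).mul (hd2 r).neg)).congr_deriv ?_
      rw [hsin2, ← hSsq]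
      simp only [id, Pi.div_apply, Pi.neg_apply]
      have ha2 : a ^ 2 = S r ^ 2 - r ^ 2 := by rw [hSsq]; ring
      rw [ha2]
      field_simp
      ring)
    (fun r _ => mul_pos (hSpos r) (hψpos r))
    (by
      intro r hr
      have h1 := hR1 r (hRR1.trans hr)
      rw [← hSsq] at h1
      have h2 : 1 ≤ S r := by
        have := hSsq r
        have := hSpos r
        nlinarith [sq_nonneg a]
      have h3 := mul_le_mul_of_nonneg_right h2 (mul_pos (hSpos r) (hψpos r)).le
      nlinarith)
    (by
      intro r hr
      have hp := hψpos r
      have hSp := hSpos r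
      have h1 := hR1 r (hRR1.trans hr)
      have h0 := hR0 r (hRR0.trans hr)
      rw [← hSsq] at h1
      have h2 := sin_gt_sub_cube (by linarith : 0 < 2 * ψ r)
      have h3 : S r ^ 4 * ψ r ^ 2 ≤ a ^ 2 / 4 := by
        have := pow_le_pow_left₀ (by positivity) h1.le 2
        nlinarith
      have h4 : S r * (2 * ψ r ^ 3) ≤ a ^ 2 / S r ^ 3 * ψ r := by
        rw [div_mul_eq_mul_div, le_div_iff₀ (by positivity)]
        nlinarith
      have h5 := mul_le_mul_of_nonneg_left h2.le hSp.le
      have h6 : S r * (2 * ψ r - (2 * ψ r) ^ 3 / 6) = 2 * (S r * ψ r) - S r * (2 * ψ r ^ 3) * (2 / 3) := by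
        ring
      have h7 : 0 < S r * (2 * ψ r ^ 3) := by positivity
      linarith)
    (by
      intro r hr
      have hp := hψpos r
      have hSp := hSpos r
      have hr0 : 0 < r := by linarith
      have h1 : sin (2 * ψ r) ≤ 2 * ψ r := sin_le (by linarith)
      have h2 := mul_le_mul_of_nonneg_left h1 hSp.le
      have h3 : a ^ 2 / S r ^ 3 * ψ r ≤ a ^ 2 / r ^ 4 * (S r * ψ r) := by
        have h4 : a ^ 2 / S r ^ 3 * ψ r = a ^ 2 / S r ^ 4 * (S r * ψ r) := by field_simp
        rw [h4]
        have h5 : r ≤ S r := Real.le_sqrt_of_sq_le (by nlinarith [sq_nonneg a])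
        gcongr
      linarith)
  refine ⟨c, hc, ?_⟩
  have hratio : Tendsto (fun r => r / S r) atTop (nhds 1) := by
    have h1 : Tendsto (fun r : ℝ => 1 - a / r) atTop (nhds 1) := by
      have := (tendsto_const_nhds (x := a)).div_atTop (tendsto_id (α := ℝ) (x := atTop))
      simpa using this.const_sub 1
    refine tendsto_of_tendsto_of_tendsto_of_le_of_le' h1 tendsto_const_nhds ?_ ?_
    · filter_upwards [eventually_gt_atTop 0] with r hr
      have hSle : S r ≤ r + a := by
        refine (Real.sqrt_le_left (by positivity)).2 ?_
        nlinarith [mul_pos hr ha]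
      have h2 : r / (r + a) ≤ r / S r := div_le_div_of_nonneg_left hr.le (hSpos r) hSle
      refine le_trans ?_ h2
      rw [le_div_iff₀ (by positivity)]
      field_simp
      nlinarith [sq_nonneg a]
    · filter_upwards [eventually_gt_atTop 0] with r hr
      rw [div_le_one (hSpos r)]
      exact Real.le_sqrt_of_sq_le (by nlinarith [sq_nonneg a])
  have := hratio.mul hlim
  rw [one_mul] at this
  refine this.congr fun r => ?_
  have := (hSpos r).ne'
  simp only [hψ]
  field_simp
end
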